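/- Let (A, M) be a commutative local ring with maximal ideal M, let E be an A-module with ME = 0 which is finitely generated as an A-module, and let R := A ⋉ E be the trivial ring extension of A by E. If A is weakly coherent, then R is weakly coherent. -/

import Mathlib

/-!
Write `R = A ⋉ E`, `M` for the maximal ideal of `A` and `k = A / M`. A proper ideal of `R` is
annihilated by `0 ⋉ E`, so it is a module over `A = R / (0 ⋉ E)`. Since `0 ⋉ E` is finitely
generated, `A` is finitely presented over `R`, and hence a proper ideal of `R` is finitely
presented over `R` if and only if it is so over `A` (`finitePresentation_proper_ideal_iff`).

For a proper ideal `I`, the kernel of the projection `I → A` embeds in the finite-dimensional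
`k`-vector space `E`, so it is finitely generated over `A`. Given `I ⊆ J` with `J` finitely
presented, the image of `J` in `A` is therefore finitely presented, and so is that of `I` by weak
coherence of `A`. It remains to see that `ker (I → A)` is finitely presented. This is clear if `k`
is finitely presented over `A`, as the kernel is then a finite direct sum of copies of `k`.
Otherwise `ker (J → A) = 0`: a nonzero element of it would span a copy of `k` that splits off from
`J` by a linear functional on `E`, making `k` finitely presented
(`finitePresentation_of_ker_ne_bot`).
-/

def IsWeaklyCoherentRing (R : Type*) [CommRing R] : Prop :=
  ∀ I J : Ideal R, I ≤ J → I ≠ ⊤ → J ≠ ⊤ → I.FG →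
    Module.FinitePresentation R J → Module.FinitePresentation R I

/-- Finite presentation descends along a surjective ring map. -/
lemma finitePresentation_of_algebraMap_surjective {S T X : Type*} [CommRing S] [CommRing T]
    [Algebra S T] (hST : Function.Surjective (algebraMap S T)) [AddCommGroup X] [Module S X]
    [Module T X] [IsScalarTower S T X] [Module.FinitePresentation S X] :
    Module.FinitePresentation T X := by
  have : Module.Finite T X := Module.Finite.of_restrictScalars_finite S T X
  have : Module.Finite S T := Module.Finite.of_surjective (Algebra.linearMap S T) hST
  obtain ⟨n, l, hl⟩ := Module.Finite.exists_fin' T X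
  refine Module.finitePresentation_of_surjective l hl ?_
  have h := Module.FinitePresentation.fg_ker (l.restrictScalars S) hl
  rw [LinearMap.ker_restrictScalars] at h
  exact Submodule.FG.of_restrictScalars S h

section VectorSpace

variable {A k E : Type*} [CommRing A] [Field k] [Algebra A k] [AddCommGroup E] [Module A E]
  [Module k E] [IsScalarTower A k E]

lemma exists_restrictScalars_eq (hk : Function.Surjective (algebraMap A k))
    (N : Submodule A E) : ∃ N' : Submodule k E, N'.restrictScalars A = N := by
  refine ⟨{ N with smul_mem' := ?_ }, by ext; rfl⟩
  intro c x hx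
  obtain ⟨a, rfl⟩ := hk c
  rw [algebraMap_smul]
  exact N.smul_mem a hx

/-- A nonzero element of `ker p` spans a copy of `k`, and a functional on `E` splits it off from
`X`; so `k` is a direct summand of `X`. -/
lemma finitePresentation_of_ker_ne_bot (hk : Function.Surjective (algebraMap A k))
    {X : Type*} [AddCommGroup X] [Module A X] [Module.FinitePresentation A X]
    (p : X →ₗ[A] A) (q : X →ₗ[A] E) (hpq : ∀ x, p x = 0 → q x = 0 → x = 0)
    (hp : LinearMap.ker p ≠ ⊥) : Module.FinitePresentation A k := by
  obtain ⟨x, hx, hx0⟩ := Submodule.exists_mem_ne_zero_of_ne_bot hp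
  have hqx : q x ≠ 0 := fun h ↦ hx0 (hpq x hx h)
  obtain ⟨ψ, hψ⟩ : ∃ ψ : E →ₗ[k] k, ψ (q x) = 1 := by
    obtain ⟨φ, hφ⟩ := LinearMap.exists_leftInverse_of_injective
      (LinearMap.toSpanSingleton k E (q x)) (LinearMap.ker_toSpanSingleton k hqx)
    exact ⟨φ, by simpa using LinearMap.congr_fun hφ 1⟩
  let g : X →ₗ[A] k := ψ.restrictScalars A ∘ₗ q
  have hker : LinearMap.ker (Algebra.linearMap A k) ≤
      LinearMap.ker (LinearMap.toSpanSingleton A X x) := by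
    intro a ha
    have ha : algebraMap A k a = 0 := ha
    rw [LinearMap.mem_ker, LinearMap.toSpanSingleton_apply]
    refine hpq _ (by rw [map_smul, LinearMap.mem_ker.1 hx, smul_zero]) ?_
    rw [map_smul, ← algebraMap_smul k, ha, zero_smul]
  let l : k →ₗ[A] X := (LinearMap.ker (Algebra.linearMap A k)).liftQ _ hker ∘ₗ
    ((Algebra.linearMap A k).quotKerEquivOfSurjective hk).symm.toLinearMap
  have hl (a : A) : l (algebraMap A k a) = a • x := by
    have : ((Algebra.linearMap A k).quotKerEquivOfSurjective hk).symm (algebraMap A k a) =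
        Submodule.Quotient.mk a := by
      rw [LinearEquiv.symm_apply_eq]; rfl
    rw [LinearMap.comp_apply, LinearEquiv.coe_coe, this]
    exact Submodule.liftQ_apply _ _ _
  have hgl : g ∘ₗ l = LinearMap.id := by
    ext c
    obtain ⟨a, rfl⟩ := hk c
    simp [hl, g, hψ, Algebra.smul_def]
  refine Module.finitePresentation_of_surjective g
    (fun c ↦ ⟨l c, LinearMap.congr_fun hgl c⟩) ?_
  rw [LinearMap.ker_eq_range_of_comp_eq_id hgl]
  exact .of_finite

variable [Module.Finite k E]

lemma finite_of_injective_of_vectorSpace (hk : Function.Surjective (algebraMap A k))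
    {X : Type*} [AddCommGroup X] [Module A X] (f : X →ₗ[A] E) (hf : Function.Injective f) :
    Module.Finite A X := by
  obtain ⟨N, hN⟩ := exists_restrictScalars_eq hk (LinearMap.range f)
  have : Module.Finite A k := Module.Finite.of_surjective (Algebra.linearMap A k) hk
  have : Module.Finite A N := Module.Finite.trans k N
  have h : Module.Finite A (N.restrictScalars A) := this
  rw [hN] at h
  exact Module.Finite.equiv (LinearEquiv.ofInjective f hf).symm

lemma finitePresentation_of_injective_of_vectorSpace (hk : Function.Surjective (algebraMap A k))
    [Module.FinitePresentation A k]
    {X : Type*} [AddCommGroup X] [Module A X] (f : X →ₗ[A] E) (hf : Function.Injective f) :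
    Module.FinitePresentation A X := by
  obtain ⟨N, hN⟩ := exists_restrictScalars_eq hk (LinearMap.range f)
  have : Module.FinitePresentation k N := Module.finitePresentation_of_finite k N
  have : Module.FinitePresentation A N := Module.FinitePresentation.trans A N k
  have h : Module.FinitePresentation A (N.restrictScalars A) := this
  rw [hN] at h
  exact .of_equiv (LinearEquiv.ofInjective f hf).symm

/-- Weak coherence passes from ideals of `A` to modules `X ⊆ Y ⊆ A × E` with `E` a
finite-dimensional `k`-vector space; `p` and `q` are the two coordinates on `Y`. -/
lemma finitePresentation_of_weaklyCoherent (hA : IsWeaklyCoherentRing A)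
    (hk : Function.Surjective (algebraMap A k))
    {X Y : Type*} [AddCommGroup X] [Module A X] [AddCommGroup Y] [Module A Y]
    [Module.Finite A X] [Module.FinitePresentation A Y]
    (i : X →ₗ[A] Y) (hi : Function.Injective i)
    (p : Y →ₗ[A] A) (q : Y →ₗ[A] E) (hpq : ∀ y, p y = 0 → q y = 0 → y = 0)
    (hp : LinearMap.range p ≠ ⊤) : Module.FinitePresentation A X := by
  have hY : Function.Injective (q ∘ₗ (LinearMap.ker p).subtype) := by
    rw [injective_iff_map_eq_zero]
    exact fun y hy ↦ Subtype.ext (hpq y y.2 hy)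
  have hX : Function.Injective ((q ∘ₗ i) ∘ₗ (LinearMap.ker (p ∘ₗ i)).subtype) := by
    rw [injective_iff_map_eq_zero]
    exact fun x hx ↦ Subtype.ext (hi ((hpq _ x.2 hx).trans (map_zero i).symm))
  have hY₀ : Module.FinitePresentation A (LinearMap.range p) := by
    refine Module.finitePresentation_of_surjective p.rangeRestrict p.surjective_rangeRestrict ?_
    rw [LinearMap.ker_rangeRestrict, ← Module.Finite.iff_fg]
    exact finite_of_injective_of_vectorSpace hk _ hY
  have hle : LinearMap.range (p ∘ₗ i) ≤ LinearMap.range p := LinearMap.range_comp_le_range i p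
  have hX₀ : Module.FinitePresentation A (LinearMap.range (p ∘ₗ i)) :=
    hA _ _ hle (ne_top_of_le_ne_top hp hle) hp (Module.Finite.iff_fg.1 inferInstance) hY₀
  suffices h : Module.FinitePresentation A (LinearMap.ker (p ∘ₗ i)) by
    rw [← LinearMap.ker_rangeRestrict] at h
    exact Module.finitePresentation_of_ker (p ∘ₗ i).rangeRestrict
      (p ∘ₗ i).surjective_rangeRestrict
  by_cases hkfp : Module.FinitePresentation A k
  · exact finitePresentation_of_injective_of_vectorSpace hk _ hX
  · have hker : LinearMap.ker p = ⊥ := by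
      by_contra h
      exact hkfp (finitePresentation_of_ker_ne_bot hk p q hpq h)
    have hker' : LinearMap.ker (p ∘ₗ i) = ⊥ :=
      LinearMap.ker_eq_bot.2 ((LinearMap.ker_eq_bot.1 hker).comp hi)
    rw [hker']
    infer_instance

end VectorSpace

section TrivSqZeroExt

open TrivSqZeroExt

attribute [local instance] algebraBase

variable {A E : Type*} [CommRing A] [AddCommGroup E] [Module A E] [Module Aᵐᵒᵖ E]
  [IsCentralScalar A E]

/-- This holds because the kernel `0 ⋉ E` of `A ⋉ E → A` is generated by any generating set
of `E`. -/
lemma finitePresentation_base (hE : Module.Finite A E) :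
    Module.FinitePresentation (TrivSqZeroExt A E) A := by
  refine Module.finitePresentation_of_surjective
    (Algebra.linearMap (TrivSqZeroExt A E) A) (fun a ↦ ⟨inl a, rfl⟩) ?_
  refine Submodule.FG.of_restrictScalars A ?_
  have : (LinearMap.ker (Algebra.linearMap (TrivSqZeroExt A E) A)).restrictScalars A =
      LinearMap.range (inrHom A E) := by
    ext x
    constructor
    · intro hx
      have hx : x.fst = 0 := hx
      exact ⟨x.snd, by ext <;> simp [hx]⟩
    · rintro ⟨e, rfl⟩
      exact fst_inr A e
  rw [this]
  exact .of_finite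

variable [IsLocalRing A]

lemma fst_mem_of_mem_proper_ideal {I : Ideal (TrivSqZeroExt A E)} (hI : I ≠ ⊤)
    {x : TrivSqZeroExt A E} (hx : x ∈ I) : x.fst ∈ IsLocalRing.maximalIdeal A := by
  rw [IsLocalRing.mem_maximalIdeal, mem_nonunits_iff, ← isUnit_iff_isUnit_fst]
  exact fun h ↦ hI (Ideal.eq_top_of_isUnit_mem I hx h)

/-- A proper ideal of `A ⋉ E` is annihilated by `0 ⋉ E`, so its `A ⋉ E`-module structure is
induced from its `A`-module structure. -/
lemma isScalarTower_proper_ideal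
    (hME : ∀ a ∈ IsLocalRing.maximalIdeal A, ∀ e : E, a • e = 0)
    {I : Ideal (TrivSqZeroExt A E)} (hI : I ≠ ⊤) : IsScalarTower (TrivSqZeroExt A E) A I := by
  refine ⟨fun r a x ↦ Subtype.ext ?_⟩
  have hx := hME _ (fst_mem_of_mem_proper_ideal hI x.2)
  change (r.fst * a) • (x : TrivSqZeroExt A E) = r * (a • (x : TrivSqZeroExt A E))
  ext
  · simp [mul_assoc, mul_left_comm]
  · simp [mul_smul, hx, smul_comm _ a]

lemma finitePresentation_proper_ideal_iff
    (hME : ∀ a ∈ IsLocalRing.maximalIdeal A, ∀ e : E, a • e = 0) (hE : Module.Finite A E)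
    {I : Ideal (TrivSqZeroExt A E)} (hI : I ≠ ⊤) :
    Module.FinitePresentation (TrivSqZeroExt A E) I ↔ Module.FinitePresentation A I := by
  have := isScalarTower_proper_ideal hME hI
  have := finitePresentation_base hE
  exact ⟨fun _ ↦ finitePresentation_of_algebraMap_surjective (S := TrivSqZeroExt A E)
    (fun a ↦ ⟨inl a, rfl⟩), fun _ ↦ .trans (TrivSqZeroExt A E) I A⟩

end TrivSqZeroExt

theorem weaklyCoherent_trivSqZeroExt_of_base (A E : Type*) [CommRing A] [IsLocalRing A]
    [AddCommGroup E] [Module A E] [Module Aᵐᵒᵖ E] [IsCentralScalar A E]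
    (hME : ∀ a ∈ IsLocalRing.maximalIdeal A, ∀ e : E, a • e = 0)
    (hE : Module.Finite A E)
    (hA : IsWeaklyCoherentRing A) :
    IsWeaklyCoherentRing (TrivSqZeroExt A E) := by
  -- `A` as the quotient `(A ⋉ E) / (0 ⋉ E)`
  let _ := TrivSqZeroExt.algebraBase A E
  intro I J hIJ hI hJ hIfg hJfp
  -- `E` as a vector space over the residue field
  let k := IsLocalRing.ResidueField A
  have hk : Function.Surjective (algebraMap A k) := IsLocalRing.residue_surjective
  have htors : Module.IsTorsionBySet A E (IsLocalRing.maximalIdeal A) :=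
    fun e a ↦ hME a a.2 e
  let _ : Module k E := htors.module
  have : IsScalarTower A k E := htors.isScalarTower
  have : Module.Finite k E := Module.Finite.of_restrictScalars_finite A k E
  have := isScalarTower_proper_ideal hME hI
  have : Module.Finite (TrivSqZeroExt A E) I := Module.Finite.iff_fg.2 hIfg
  have : Module.Finite A I := Module.Finite.of_restrictScalars_finite (TrivSqZeroExt A E) A I
  have : Module.FinitePresentation A J :=
    (finitePresentation_proper_ideal_iff hME hE hJ).1 hJfp
  rw [finitePresentation_proper_ideal_iff hME hE hI]
  let p : J →ₗ[A] A :=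
    (TrivSqZeroExt.fstHom A A E).toLinearMap ∘ₗ (J.restrictScalars A).subtype
  let q : J →ₗ[A] E := TrivSqZeroExt.sndHom A E ∘ₗ (J.restrictScalars A).subtype
  refine finitePresentation_of_weaklyCoherent hA hk
    ((Submodule.inclusion hIJ).restrictScalars A) (Submodule.inclusion_injective hIJ)
    p q (fun y h₁ h₂ ↦ Subtype.ext (TrivSqZeroExt.ext h₁ h₂)) ?_
  refine ne_top_of_le_ne_top (IsLocalRing.maximalIdeal.isMaximal A).ne_top ?_
  rintro _ ⟨y, rfl⟩
  exact fst_mem_of_mem_proper_ideal hJ y.2
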